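/- arXiv:0911.2785 — 2 statements merged into one kernel-verified Lean document; each statement's English description precedes it below -/
import Mathlib

section
/- Let G = (N, E) be a finite directed graph and let P₁(G) be the ground normal logic program consisting of the facts node(x) for x ∈ N and edge(x,y) for (x,y) ∈ E, together with all ground instances over N of the rules: v(X) ← node(X), ¬nv(X); nv(X) ← node(X), ¬v(X); c ← edge(X,Y), ¬v(X), ¬v(Y), ¬c. Then an interpretation M is a stable model of P₁(G) if and only if there exists a vertex cover V of G (a set V ⊆ N such that every edge of G has at least one endpoint in V) with M = {node(x) : x ∈ N} ∪ {edge(x,y) : (x,y) ∈ E} ∪ {v(x) : x ∈ V} ∪ {nv(x) : x ∈ N∖V}; in particular c ∉ M for every stable model M. -/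
/-- A ground normal logic program rule: head atom, positive body atoms, negated body atoms. -/
structure Rule (α : Type*) where
  head : α
  pos : Set α
  neg : Set α

/-- A fact is a rule with empty body. -/
def Rule.fact {α : Type*} (a : α) : Rule α := ⟨a, ∅, ∅⟩

/-- `I` is closed under the Gelfond–Lifschitz reduct `P^M`: for every rule of `P` whose
negated body atoms are all outside `M`, if the positive body is contained in `I` then
so is the head. -/
def ClosedUnderReduct {α : Type*} (P : Set (Rule α)) (M I : Set α) : Prop :=
  ∀ r ∈ P, (∀ c ∈ r.neg, c ∉ M) → r.pos ⊆ I → r.head ∈ I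

/-- Least model of the reduct `P^M`: the least set of atoms closed under its rules. -/
def LeastReductModel {α : Type*} (P : Set (Rule α)) (M : Set α) : Set α :=
  ⋂₀ {I | ClosedUnderReduct P M I}

/-- `M` is a stable model of `P` if it equals the least model of the reduct `P^M`. -/
def IsStableModel {α : Type*} (P : Set (Rule α)) (M : Set α) : Prop :=
  M = LeastReductModel P M

/-- Atoms of the vertex-cover program. -/
inductive VCAtom (V : Type*) where
  | node : V → VCAtom V
  | edge : V → V → VCAtom V
  | v : V → VCAtom V
  | nv : V → VCAtom V
  | c : VCAtom V

/-- The ground program `P₁(G)` of the vertex-cover query. -/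
def vcProgram {V : Type*} (N : Finset V) (E : Finset (V × V)) : Set (Rule (VCAtom V)) :=
  {r | ∃ x ∈ N, r = Rule.fact (VCAtom.node x)} ∪
  {r | ∃ e ∈ E, r = Rule.fact (VCAtom.edge e.1 e.2)} ∪
  {r | ∃ x ∈ N, r = ⟨VCAtom.v x, {VCAtom.node x}, {VCAtom.nv x}⟩} ∪
  {r | ∃ x ∈ N, r = ⟨VCAtom.nv x, {VCAtom.node x}, {VCAtom.v x}⟩} ∪
  {r | ∃ x ∈ N, ∃ y ∈ N,
      r = ⟨VCAtom.c, {VCAtom.edge x y}, {VCAtom.v x, VCAtom.v y, VCAtom.c}⟩}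

/-!
Positive bodies of the vertex-cover program mention only `node` and `edge` atoms, and these head
only facts. So atoms never support themselves in a circle, and by Fages' theorem the stable models
are exactly the models of Clark's completion. The completion says that `v` and `nv` split the nodes,
and its equation for `c`, whose only rules contain `¬c`, can hold only if `c` is false and every
edge has an endpoint in `v`.
-/

section LogicProgram

variable {α : Type*} {P : Set (Rule α)} {M I : Set α} {a : α}

/-- The body of the rule `r` is true in the interpretation `M`, so that `r` supports its head. -/
def Rule.BodyHolds (r : Rule α) (M : Set α) : Prop :=
  (∀ c ∈ r.neg, c ∉ M) ∧ r.pos ⊆ M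

/-- A supported model of `P`, i.e. a model of Clark's completion of `P`: an atom is true iff it is
the head of a rule with true body. -/
def IsSupportedModel (P : Set (Rule α)) (M : Set α) : Prop :=
  ∀ a, a ∈ M ↔ ∃ r ∈ P, r.head = a ∧ r.BodyHolds M

/-- The arcs of the positive dependency graph of `P`, along which `IsTight` forbids infinite
descent. They are oriented from body to head. -/
def PosDependency (P : Set (Rule α)) (b a : α) : Prop :=
  ∃ r ∈ P, r.head = a ∧ b ∈ r.pos

/-- A tight program: the hypothesis of Fages' theorem. As programs may be infinite, acyclicity of
the positive dependency graph is strengthened to well-foundedness. -/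
def IsTight (P : Set (Rule α)) : Prop :=
  WellFounded (PosDependency P)

theorem leastReductModel_subset (hI : ClosedUnderReduct P M I) : LeastReductModel P M ⊆ I :=
  Set.sInter_subset_of_mem hI

theorem closedUnderReduct_leastReductModel : ClosedUnderReduct P M (LeastReductModel P M) :=
  fun r hr hneg hpos _ hI => hI r hr hneg (hpos.trans (leastReductModel_subset hI))

theorem mem_leastReductModel_iff :
    a ∈ LeastReductModel P M ↔
      ∃ r ∈ P, r.head = a ∧ (∀ c ∈ r.neg, c ∉ M) ∧ r.pos ⊆ LeastReductModel P M := by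
  constructor
  · refine fun ha => leastReductModel_subset
      (I := {b | ∃ r ∈ P, r.head = b ∧ (∀ c ∈ r.neg, c ∉ M) ∧ r.pos ⊆ LeastReductModel P M}) ?_ ha
    intro r hr hneg hpos
    refine ⟨r, hr, rfl, hneg, fun b hb => ?_⟩
    obtain ⟨s, hs, rfl, hsneg, hspos⟩ := hpos hb
    exact closedUnderReduct_leastReductModel s hs hsneg hspos
  · rintro ⟨r, hr, rfl, hneg, hpos⟩
    exact closedUnderReduct_leastReductModel r hr hneg hpos

theorem IsStableModel.isSupportedModel (h : IsStableModel P M) : IsSupportedModel P M := by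
  have hM : LeastReductModel P M = M := h.symm
  intro a
  simpa only [hM, Rule.BodyHolds] using mem_leastReductModel_iff (P := P) (M := M) (a := a)

theorem IsSupportedModel.closedUnderReduct (h : IsSupportedModel P M) :
    ClosedUnderReduct P M M :=
  fun r hr hneg hpos => (h r.head).2 ⟨r, hr, rfl, hneg, hpos⟩

theorem IsSupportedModel.isStableModel (hP : IsTight P) (h : IsSupportedModel P M) :
    IsStableModel P M := by
  refine Set.Subset.antisymm (fun a => ?_) (leastReductModel_subset h.closedUnderReduct)
  induction a using hP.induction with
  | _ a ih =>
    intro ha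
    obtain ⟨r, hr, rfl, hneg, hpos⟩ := (h a).1 ha
    exact closedUnderReduct_leastReductModel r hr hneg
      fun b hb => ih b ⟨r, hr, rfl, hb⟩ (hpos hb)

theorem IsTight.isStableModel_iff_isSupportedModel (hP : IsTight P) :
    IsStableModel P M ↔ IsSupportedModel P M :=
  ⟨IsStableModel.isSupportedModel, IsSupportedModel.isStableModel hP⟩

end LogicProgram

theorem exists_finset_subset_iff {α : Type*} {s : Finset α} {p : Set α → Prop} :
    (∃ t : Finset α, t ⊆ s ∧ p t) ↔ ∃ t ⊆ (s : Set α), p t := by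
  constructor
  · rintro ⟨t, ht, hp⟩
    exact ⟨t, Finset.coe_subset.2 ht, hp⟩
  · rintro ⟨t, ht, hp⟩
    lift t to Finset α using s.finite_toSet.subset ht
    exact ⟨t, Finset.coe_subset.1 ht, hp⟩

section VertexCover

variable {V : Type*} {N : Set V} {E : Set (V × V)} {M : Set (VCAtom V)} {S : Set V}

/-- The program `vcProgram` for a graph that need not be finite. -/
def vertexCoverProgram (N : Set V) (E : Set (V × V)) : Set (Rule (VCAtom V)) :=
  {r | ∃ x ∈ N, r = Rule.fact (VCAtom.node x)} ∪
  {r | ∃ e ∈ E, r = Rule.fact (VCAtom.edge e.1 e.2)} ∪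
  {r | ∃ x ∈ N, r = ⟨VCAtom.v x, {VCAtom.node x}, {VCAtom.nv x}⟩} ∪
  {r | ∃ x ∈ N, r = ⟨VCAtom.nv x, {VCAtom.node x}, {VCAtom.v x}⟩} ∪
  {r | ∃ x ∈ N, ∃ y ∈ N,
      r = ⟨VCAtom.c, {VCAtom.edge x y}, {VCAtom.v x, VCAtom.v y, VCAtom.c}⟩}

/-- The interpretation encoding the graph `(N, E)` and a set `S` of its nodes; it is stable when `S`
is a vertex cover. -/
def vertexCoverModel (N : Set V) (E : Set (V × V)) (S : Set V) : Set (VCAtom V) :=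
  (VCAtom.node '' N) ∪ ((fun e : V × V => VCAtom.edge e.1 e.2) '' E) ∪
    (VCAtom.v '' S) ∪ (VCAtom.nv '' (N \ S))

/-- A level mapping witnessing that the vertex-cover program is tight. -/
def VCAtom.level : VCAtom V → ℕ
  | .node _ | .edge _ _ => 0
  | .v _ | .nv _ | .c => 1

theorem isTight_vertexCoverProgram : IsTight (vertexCoverProgram N E) := by
  refine Subrelation.wf ?_ (measure VCAtom.level).wf
  rintro b _ ⟨r, ((((⟨x, -, rfl⟩ | ⟨e, -, rfl⟩) | ⟨x, -, rfl⟩) | ⟨x, -, rfl⟩) |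
    ⟨x, -, y, -, rfl⟩), rfl, hb⟩
  · exact hb.elim
  · exact hb.elim
  all_goals
    obtain rfl := hb
    exact Nat.zero_lt_one

theorem exists_mem_vertexCoverProgram_iff {p : Rule (VCAtom V) → Prop} :
    (∃ r ∈ vertexCoverProgram N E, p r) ↔
      (∃ x ∈ N, p (Rule.fact (.node x))) ∨
      (∃ e ∈ E, p (Rule.fact (.edge e.1 e.2))) ∨
      (∃ x ∈ N, p ⟨.v x, {.node x}, {.nv x}⟩) ∨
      (∃ x ∈ N, p ⟨.nv x, {.node x}, {.v x}⟩) ∨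
      (∃ x ∈ N, ∃ y ∈ N, p ⟨.c, {.edge x y}, {.v x, .v y, .c}⟩) := by
  simp only [vertexCoverProgram, Set.mem_union, Set.mem_ofPred_eq]
  grind

theorem VCAtom.forall {p : VCAtom V → Prop} :
    (∀ a, p a) ↔
      (∀ x, p (.node x)) ∧ (∀ x y, p (.edge x y)) ∧ (∀ x, p (.v x)) ∧ (∀ x, p (.nv x)) ∧ p .c :=
  ⟨fun h => ⟨fun _ => h _, fun _ _ => h _, fun _ => h _, fun _ => h _, h _⟩,
    fun ⟨hnode, hedge, hv, hnv, hc⟩ a => by cases a <;> solve_by_elim⟩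

theorem isSupportedModel_vertexCoverProgram_iff :
    IsSupportedModel (vertexCoverProgram N E) M ↔
      (∀ x, .node x ∈ M ↔ x ∈ N) ∧
      (∀ x y, .edge x y ∈ M ↔ (x, y) ∈ E) ∧
      (∀ x, .v x ∈ M ↔ x ∈ N ∧ .nv x ∉ M ∧ .node x ∈ M) ∧
      (∀ x, .nv x ∈ M ↔ x ∈ N ∧ .v x ∉ M ∧ .node x ∈ M) ∧
      (.c ∈ M ↔ ∃ x ∈ N, ∃ y ∈ N, (.v x ∉ M ∧ .v y ∉ M ∧ .c ∉ M) ∧ .edge x y ∈ M) := by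
  simp [IsSupportedModel, VCAtom.forall, exists_mem_vertexCoverProgram_iff, Rule.BodyHolds,
    Rule.fact, and_assoc]

theorem eq_vertexCoverModel_iff :
    M = vertexCoverModel N E S ↔
      (∀ x, .node x ∈ M ↔ x ∈ N) ∧
      (∀ x y, .edge x y ∈ M ↔ (x, y) ∈ E) ∧
      (∀ x, .v x ∈ M ↔ x ∈ S) ∧
      (∀ x, .nv x ∈ M ↔ x ∈ N ∧ x ∉ S) ∧
      .c ∉ M := by
  simp [Set.ext_iff, VCAtom.forall, vertexCoverModel]

theorem isSupportedModel_vertexCoverProgram_iff_exists_cover (hE : ∀ e ∈ E, e.1 ∈ N ∧ e.2 ∈ N) :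
    IsSupportedModel (vertexCoverProgram N E) M ↔
      ∃ S ⊆ N, (∀ e ∈ E, e.1 ∈ S ∨ e.2 ∈ S) ∧ M = vertexCoverModel N E S := by
  simp only [isSupportedModel_vertexCoverProgram_iff, eq_vertexCoverModel_iff]
  constructor
  · rintro ⟨hnode, hedge, hv, hnv, hc⟩
    have c_notMem : .c ∉ M := by
      intro hcM
      obtain ⟨_, -, _, -, ⟨-, -, hc_neg⟩, -⟩ := hc.1 hcM
      exact hc_neg hcM
    have cover : ∀ e ∈ E, .v e.1 ∈ M ∨ .v e.2 ∈ M := by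
      intro e he
      by_contra! uncovered
      exact c_notMem <| hc.2 ⟨e.1, (hE e he).1, e.2, (hE e he).2,
        ⟨uncovered.1, uncovered.2, c_notMem⟩, (hedge _ _).2 he⟩
    have nv_iff (x : V) : .nv x ∈ M ↔ x ∈ N ∧ .v x ∉ M := by
      rw [hnv, hnode]
      tauto
    exact ⟨VCAtom.v ⁻¹' M, fun x hx => ((hv x).1 hx).1, cover,
      hnode, hedge, fun _ => Iff.rfl, nv_iff, c_notMem⟩
  · rintro ⟨S, hSN, cover, hnode, hedge, hv, hnv, c_notMem⟩
    refine ⟨hnode, hedge, fun x => ?_, fun x => ?_, iff_of_false c_notMem ?_⟩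
    · have hx : x ∈ S → x ∈ N := @hSN x
      rw [hv, hnv, hnode]
      tauto
    · rw [hnv, hv, hnode]
      tauto
    · rintro ⟨x, -, y, -, ⟨hx, hy, -⟩, hxy⟩
      rw [hv] at hx hy
      exact (cover (x, y) ((hedge x y).1 hxy)).elim hx hy

theorem stmt0_general (N : Set V) (E : Set (V × V))
    (hE : ∀ e ∈ E, e.1 ∈ N ∧ e.2 ∈ N) (M : Set (VCAtom V)) :
    (IsStableModel (vertexCoverProgram N E) M ↔
      ∃ S ⊆ N, (∀ e ∈ E, e.1 ∈ S ∨ e.2 ∈ S) ∧ M = vertexCoverModel N E S) ∧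
    (IsStableModel (vertexCoverProgram N E) M → VCAtom.c ∉ M) := by
  have stable_iff := isTight_vertexCoverProgram.isStableModel_iff_isSupportedModel.trans
    (isSupportedModel_vertexCoverProgram_iff_exists_cover (M := M) hE)
  refine ⟨stable_iff, fun hM => ?_⟩
  obtain ⟨S, -, -, hMS⟩ := stable_iff.1 hM
  exact (eq_vertexCoverModel_iff.1 hMS).2.2.2.2

end VertexCover

theorem stmt0 {V : Type*} (N : Finset V) (E : Finset (V × V))
    (hE : ∀ e ∈ E, e.1 ∈ N ∧ e.2 ∈ N) (M : Set (VCAtom V)) :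
    (IsStableModel (vcProgram N E) M ↔
      ∃ S : Finset V, S ⊆ N ∧ (∀ e ∈ E, e.1 ∈ S ∨ e.2 ∈ S) ∧
        M = (VCAtom.node '' ↑N) ∪ ((fun e : V × V => VCAtom.edge e.1 e.2) '' ↑E) ∪
            (VCAtom.v '' ↑S) ∪ (VCAtom.nv '' (↑N \ ↑S))) ∧
    (IsStableModel (vcProgram N E) M → VCAtom.c ∉ M) := by
  have general := stmt0_general (N : Set V) (E : Set (V × V)) hE M
  exact ⟨general.1.trans exists_finset_subset_iff.symm, general.2⟩
end

section
/- Let G = (N, E) be a finite simple graph and C a finite nonempty set of colors, and let P(G,C) be the ground normal logic program consisting of the graph facts together with the standard translation of the k-coloring program: the generalized partition rule ⊕_C col(X,C) ← node(X), color(C) and the constraint ⇐ edge(X,Y), col(X,C), col(Y,C) (translated as c₀ ← edge(x,y), col(x,c), col(y,c), ¬c₀ with fresh atom c₀). Then the stable models of P(G,C) are in bijection with the proper colorings of G with colors in C, i.e., the functions col : N → C such that col(x) ≠ col(y) whenever {x,y} ∈ E; the stable model corresponding to col contains exactly the atoms col(x, col(x)) among the col-atoms. In particular, P(G,C) has a stable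 model if and only if G admits a proper coloring with colors from C. -/
/-- Atoms of the k-coloring program. -/
inductive CAtom (V C : Type*) where
  | node : V → CAtom V C
  | color : C → CAtom V C
  | edge : V → V → CAtom V C
  | col : V → C → CAtom V C
  | diff : V → C → CAtom V C
  | c0 : CAtom V C

/-- The ground program `P(G,C)`: graph facts plus the standard translation of the
generalized partition rule `⊕_C col(X,C) ← node(X), color(C)` and of the constraint
`⇐ edge(X,Y), col(X,C), col(Y,C)`. -/
def colProgram {V C : Type*} (G : SimpleGraph V) : Set (Rule (CAtom V C)) :=
  {r | ∃ x : V, r = Rule.fact (CAtom.node x)} ∪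
  {r | ∃ c : C, r = Rule.fact (CAtom.color c)} ∪
  {r | ∃ x y : V, G.Adj x y ∧ r = Rule.fact (CAtom.edge x y)} ∪
  {r | ∃ (x : V) (c : C), r = ⟨CAtom.col x c, ∅, {CAtom.diff x c}⟩} ∪
  {r | ∃ (x : V) (c c' : C), c' ≠ c ∧ r = ⟨CAtom.diff x c, {CAtom.col x c'}, ∅⟩} ∪
  {r | ∃ (x y : V) (c : C),
      r = ⟨CAtom.c0, {CAtom.edge x y, CAtom.col x c, CAtom.col y c}, {CAtom.c0}⟩}

/-- The interpretation corresponding to a coloring `f`. -/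
def colModel {V C : Type*} (G : SimpleGraph V) (f : V → C) : Set (CAtom V C) :=
  {a | ∃ x : V, a = CAtom.node x} ∪
  {a | ∃ c : C, a = CAtom.color c} ∪
  {a | ∃ x y : V, G.Adj x y ∧ a = CAtom.edge x y} ∪
  {a | ∃ x : V, a = CAtom.col x (f x)} ∪
  {a | ∃ (x : V) (c : C), c ≠ f x ∧ a = CAtom.diff x c}

/-!
A stable model `M` is the least set closed under the reduct by `M`, so its atoms are supported by
rules of the program and distinct stable models are incomparable. A stable model of the coloring
program therefore only has to be shown to contain some `colModel G f` with `f` proper, which is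
itself stable. Support of the `diff`-atoms yields an atom `col x (f x) ∈ M` for every `x`, and any
such `f` is proper: the constraint rules would otherwise derive `c0`, which is unsupported because
`¬c0` occurs in the body of every rule with head `c0`.
-/

section StableModel

variable {α : Type*} {P Q : Set (Rule α)} {M N I : Set α}

theorem isLeast_leastReductModel (P : Set (Rule α)) (M : Set α) :
    IsLeast {I | ClosedUnderReduct P M I} (LeastReductModel P M) :=
  ⟨fun r hr hneg hpos _ hI => hI r hr hneg (hpos.trans (Set.sInter_subset_of_mem hI)),
    fun _ hI => Set.sInter_subset_of_mem hI⟩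

theorem isStableModel_iff_isLeast :
    IsStableModel P M ↔ IsLeast {I | ClosedUnderReduct P M I} M :=
  eq_comm.trans (isLeast_leastReductModel P M).isLeast_iff_eq.symm

theorem closedUnderReduct_union :
    ClosedUnderReduct (P ∪ Q) M I ↔ ClosedUnderReduct P M I ∧ ClosedUnderReduct Q M I := by
  simp only [ClosedUnderReduct, Set.mem_union, or_imp, forall_and]

theorem closedUnderReduct_setOf_exists {ι : Sort*} {p : ι → Rule α → Prop} :
    ClosedUnderReduct {r | ∃ i, p i r} M I ↔ ∀ i, ClosedUnderReduct {r | p i r} M I :=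
  ⟨fun h i r hr => h r ⟨i, hr⟩, fun h r ⟨i, hr⟩ => h i r hr⟩

theorem closedUnderReduct_setOf_and {q : Prop} {p : Rule α → Prop} :
    ClosedUnderReduct {r | q ∧ p r} M I ↔ (q → ClosedUnderReduct {r | p r} M I) :=
  ⟨fun h hq r hr => h r ⟨hq, hr⟩, fun h r ⟨hq, hr⟩ => h hq r hr⟩

theorem closedUnderReduct_setOf_eq {r : Rule α} :
    ClosedUnderReduct {r' | r' = r} M I ↔ (∀ c ∈ r.neg, c ∉ M) → r.pos ⊆ I → r.head ∈ I :=
  forall_eq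

theorem ClosedUnderReduct.mono_left (hMN : M ⊆ N) (h : ClosedUnderReduct P M I) :
    ClosedUnderReduct P N I :=
  fun r hr hneg => h r hr fun c hc hcM => hneg c hc (hMN hcM)

namespace IsStableModel

theorem closedUnderReduct (hM : IsStableModel P M) : ClosedUnderReduct P M M :=
  (isStableModel_iff_isLeast.1 hM).1

theorem subset_of_closedUnderReduct (hM : IsStableModel P M) (hI : ClosedUnderReduct P M I) :
    M ⊆ I :=
  (isStableModel_iff_isLeast.1 hM).2 hI

theorem eq_of_subset (hM : IsStableModel P M) (hN : IsStableModel P N) (hMN : M ⊆ N) : M = N :=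
  hMN.antisymm (hN.subset_of_closedUnderReduct (hM.closedUnderReduct.mono_left hMN))

theorem exists_rule_of_mem (hM : IsStableModel P M) {a : α} (ha : a ∈ M) :
    ∃ r ∈ P, r.head = a ∧ (∀ c ∈ r.neg, c ∉ M) ∧ r.pos ⊆ M := by
  by_contra! unsupported
  have hclosed : ClosedUnderReduct P M (M \ {a}) := fun r hr hneg hpos =>
    have hposM : r.pos ⊆ M := hpos.trans Set.sdiff_subset
    ⟨hM.closedUnderReduct r hr hneg hposM, fun hhead => unsupported r hr hhead hneg hposM⟩
  exact (hM.subset_of_closedUnderReduct hclosed ha).2 rfl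

theorem notMem_of_forall_mem_neg (hM : IsStableModel P M) {a : α}
    (ha : ∀ r ∈ P, r.head = a → a ∈ r.neg) : a ∉ M := fun haM =>
  let ⟨r, hr, hhead, hneg, _⟩ := hM.exists_rule_of_mem haM
  hneg a (ha r hr hhead) haM

end IsStableModel

end StableModel

section Coloring

open CAtom

variable {V C : Type*} {G : SimpleGraph V} {M I : Set (CAtom V C)} {f : V → C}

theorem closedUnderReduct_colProgram_iff :
    ClosedUnderReduct (colProgram G) M I ↔
      (∀ x, node x ∈ I) ∧ (∀ c, color c ∈ I) ∧ (∀ x y, G.Adj x y → edge x y ∈ I) ∧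
      (∀ x c, diff x c ∉ M → col x c ∈ I) ∧
      (∀ x c c', c' ≠ c → col x c' ∈ I → diff x c ∈ I) ∧
      (∀ x y c, c0 ∉ M → edge x y ∈ I → col x c ∈ I → col y c ∈ I → c0 ∈ I) := by
  simp only [colProgram, closedUnderReduct_union, closedUnderReduct_setOf_exists,
    closedUnderReduct_setOf_and, closedUnderReduct_setOf_eq, and_assoc]
  simp [Rule.fact, Set.insert_subset_iff]

theorem edge_mem_colModel {x y : V} : edge x y ∈ colModel G f ↔ G.Adj x y := by
  simp [colModel]

theorem col_mem_colModel {x : V} {c : C} : col x c ∈ colModel G f ↔ c = f x := by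
  simp [colModel]

theorem diff_mem_colModel {x : V} {c : C} : diff x c ∈ colModel G f ↔ c ≠ f x := by
  simp [colModel]

theorem colModel_injective : Function.Injective (colModel G : (V → C) → Set (CAtom V C)) :=
  fun f g hfg => funext fun x =>
    col_mem_colModel.1 (hfg ▸ col_mem_colModel.2 rfl : col x (f x) ∈ colModel G g)

theorem ClosedUnderReduct.colModel_subset (hI : ClosedUnderReduct (colProgram G) M I)
    (hf : ∀ x, col x (f x) ∈ I) : colModel G f ⊆ I := by
  obtain ⟨hnode, hcolor, hedge, -, hdiff, -⟩ := closedUnderReduct_colProgram_iff.1 hI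
  rintro a ((((⟨x, rfl⟩ | ⟨c, rfl⟩) | ⟨x, y, hxy, rfl⟩) | ⟨x, rfl⟩) | ⟨x, c, hne, rfl⟩)
  · exact hnode x
  · exact hcolor c
  · exact hedge x y hxy
  · exact hf x
  · exact hdiff x c (f x) hne.symm (hf x)

theorem closedUnderReduct_colModel (hf : ∀ x y, G.Adj x y → f x ≠ f y) :
    ClosedUnderReduct (colProgram G) (colModel G f) (colModel G f) := by
  simp only [closedUnderReduct_colProgram_iff, edge_mem_colModel, col_mem_colModel,
    diff_mem_colModel]
  refine ⟨by simp [colModel], by simp [colModel], fun _ _ => id, fun _ _ => not_not.1, ?_, ?_⟩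
  · rintro x c _ hne rfl
    exact hne.symm
  · rintro x y c - hxy hx hy
    exact absurd (hx.symm.trans hy) (hf x y hxy)

theorem isStableModel_colModel (hf : ∀ x y, G.Adj x y → f x ≠ f y) :
    IsStableModel (colProgram G) (colModel G f) := by
  refine isStableModel_iff_isLeast.2 ⟨closedUnderReduct_colModel hf, fun I hI => ?_⟩
  obtain ⟨-, -, -, hcol, -, -⟩ := closedUnderReduct_colProgram_iff.1 hI
  exact hI.colModel_subset fun x => hcol x (f x) fun hdiff => diff_mem_colModel.1 hdiff rfl

namespace IsStableModel

theorem exists_col_mem_of_diff_mem (hM : IsStableModel (colProgram G) M) {x : V} {c : C}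
    (hc : diff x c ∈ M) : ∃ c', c' ≠ c ∧ col x c' ∈ M := by
  obtain ⟨r, hr, hhead, -, hpos⟩ := hM.exists_rule_of_mem hc
  rcases hr with (((((⟨_, rfl⟩ | ⟨_, rfl⟩) | ⟨_, _, _, rfl⟩) | ⟨_, _, rfl⟩) |
    ⟨_, _, c', hne, rfl⟩) | ⟨_, _, _, rfl⟩) <;> cases hhead
  exact ⟨c', hne, hpos rfl⟩

theorem exists_col_mem [Nonempty C] (hM : IsStableModel (colProgram G) M) (x : V) :
    ∃ c, col x c ∈ M := by
  obtain ⟨c⟩ := ‹Nonempty C›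
  by_cases hdiff : diff x c ∈ M
  · obtain ⟨c', -, hc'⟩ := hM.exists_col_mem_of_diff_mem hdiff
    exact ⟨c', hc'⟩
  · obtain ⟨-, -, -, hcol, -, -⟩ := closedUnderReduct_colProgram_iff.1 hM.closedUnderReduct
    exact ⟨c, hcol x c hdiff⟩

theorem c0_notMem (hM : IsStableModel (colProgram G) M) : c0 ∉ M := by
  refine hM.notMem_of_forall_mem_neg ?_
  rintro r (((((⟨_, rfl⟩ | ⟨_, rfl⟩) | ⟨_, _, _, rfl⟩) | ⟨_, _, rfl⟩) | ⟨_, _, _, _, rfl⟩) |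
    ⟨_, _, _, rfl⟩) hhead <;> cases hhead
  rfl

theorem ne_of_adj (hM : IsStableModel (colProgram G) M) {x y : V} (hxy : G.Adj x y) {c d : C}
    (hx : col x c ∈ M) (hy : col y d ∈ M) : c ≠ d := by
  rintro rfl
  obtain ⟨-, -, hedge, -, -, hc0⟩ := closedUnderReduct_colProgram_iff.1 hM.closedUnderReduct
  exact hM.c0_notMem (hc0 x y c hM.c0_notMem (hedge x y hxy) hx hy)

theorem exists_eq_colModel [Nonempty C] (hM : IsStableModel (colProgram G) M) :
    ∃ f : V → C, (∀ x y, G.Adj x y → f x ≠ f y) ∧ M = colModel G f := by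
  choose f hfM using hM.exists_col_mem
  have hf : ∀ x y, G.Adj x y → f x ≠ f y := fun x y hxy => hM.ne_of_adj hxy (hfM x) (hfM y)
  have hsub : colModel G f ⊆ M := hM.closedUnderReduct.colModel_subset hfM
  exact ⟨f, hf, ((isStableModel_colModel hf).eq_of_subset hM hsub).symm⟩

end IsStableModel

theorem isStableModel_colProgram_iff [Nonempty C] :
    IsStableModel (colProgram G) M ↔
      ∃ f : V → C, (∀ x y, G.Adj x y → f x ≠ f y) ∧ M = colModel G f :=
  ⟨IsStableModel.exists_eq_colModel, fun ⟨_, hf, hM⟩ => hM ▸ isStableModel_colModel hf⟩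

/-- The bijection between the proper colorings of `G` and the stable models of `colProgram G`,
sending `f` to `colModel G f`. -/
noncomputable def colModelEquiv [Nonempty C] (G : SimpleGraph V) :
    {f : V → C // ∀ x y, G.Adj x y → f x ≠ f y} ≃
      {M : Set (CAtom V C) // IsStableModel (colProgram G) M} :=
  Equiv.ofBijective (fun f => ⟨colModel G f, isStableModel_colModel f.2⟩)
    ⟨fun _ _ hfg => Subtype.ext (colModel_injective (congrArg Subtype.val hfg)), fun ⟨_, hM⟩ =>
      let ⟨f, hf, hMf⟩ := hM.exists_eq_colModel
      ⟨⟨f, hf⟩, Subtype.ext hMf.symm⟩⟩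

end Coloring

theorem stmt6_general {V C : Type*} [Nonempty C] (G : SimpleGraph V) :
    (∀ M : Set (CAtom V C), IsStableModel (colProgram G) M ↔
      ∃ f : V → C, (∀ x y : V, G.Adj x y → f x ≠ f y) ∧ M = colModel G f) ∧
    Nonempty ({M : Set (CAtom V C) // IsStableModel (colProgram G) M} ≃
      {f : V → C // ∀ x y : V, G.Adj x y → f x ≠ f y}) ∧
    ((∃ M : Set (CAtom V C), IsStableModel (colProgram G) M) ↔
      ∃ f : V → C, ∀ x y : V, G.Adj x y → f x ≠ f y) := by
  let e := (colModelEquiv (C := C) G).symm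
  refine ⟨fun _ => isStableModel_colProgram_iff, ⟨e⟩, ?_⟩
  simpa only [nonempty_subtype] using e.nonempty_congr

theorem stmt6 {V C : Type*} [Fintype V] [Fintype C] [Nonempty C] (G : SimpleGraph V) :
    (∀ M : Set (CAtom V C), IsStableModel (colProgram G) M ↔
      ∃ f : V → C, (∀ x y : V, G.Adj x y → f x ≠ f y) ∧ M = colModel G f) ∧
    Nonempty ({M : Set (CAtom V C) // IsStableModel (colProgram G) M} ≃
      {f : V → C // ∀ x y : V, G.Adj x y → f x ≠ f y}) ∧
    ((∃ M : Set (CAtom V C), IsStableModel (colProgram G) M) ↔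
      ∃ f : V → C, ∀ x y : V, G.Adj x y → f x ≠ f y) :=
  stmt6_general G
end
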